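/- arXiv:1802.04214 — 3 statements merged into one kernel-verified Lean document; each statement's English description precedes it below -/
import Mathlib

section
/- The possible sizes of minimal 1-saturating sets in PG(3,2) are exactly 5, 6 and 8: a natural number k is the cardinality of some minimal 1-saturating set of nonzero vectors of (ZMod 2)^4 if and only if k ∈ {5, 6, 8}. -/
/-- Points of PG(n-1,2) are the nonzero vectors of `Fin n → ZMod 2`.
A set `S` of nonzero vectors is 1-saturating if every nonzero vector `x ∉ S`
is the sum of two distinct elements of `S`. -/
def Saturating {n : ℕ} (S : Set (Fin n → ZMod 2)) : Prop :=
  (∀ s ∈ S, s ≠ 0) ∧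
    ∀ x : Fin n → ZMod 2, x ≠ 0 → x ∉ S →
      ∃ a ∈ S, ∃ b ∈ S, a ≠ b ∧ x = a + b

/-- A minimal 1-saturating set: 1-saturating, and removing any point destroys saturation. -/
def MinSat {n : ℕ} (S : Set (Fin n → ZMod 2)) : Prop :=
  Saturating S ∧ ∀ s ∈ S, ¬ Saturating (S \ {s})

/-- A cap: a set of nonzero vectors no three pairwise distinct elements of which sum to zero. -/
def IsCap {n : ℕ} (S : Set (Fin n → ZMod 2)) : Prop :=
  (∀ s ∈ S, s ≠ 0) ∧
    ∀ a ∈ S, ∀ b ∈ S, ∀ c ∈ S, a ≠ b → a ≠ c → b ≠ c → a + b + c ≠ 0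

/-- A complete cap: a cap that is 1-saturating. -/
def CompleteCap {n : ℕ} (S : Set (Fin n → ZMod 2)) : Prop :=
  IsCap S ∧ Saturating S

/-- Projective equivalence: some element of GL(n, ZMod 2) maps `S` onto `T`. -/
def ProjEquiv {n : ℕ} (S T : Set (Fin n → ZMod 2)) : Prop :=
  ∃ g : Matrix.GeneralLinearGroup (Fin n) (ZMod 2),
    (fun x => Matrix.mulVec (g : Matrix (Fin n) (Fin n) (ZMod 2)) x) '' S = T

/-!
Put `A = S ∪ {0}`. In characteristic two, `S` is 1-saturating exactly when `A + A` is the whole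
space `V`, a condition that is invariant under translations of `A`.

* Counting unordered pairs gives `|S| ≥ 5`, and `A + A = V` holds automatically as soon as
  `2 |A| > |V|`, so that a minimal `S` has at most `8` points.
* Suppose `|A| = 8 = |V| / 2` and some point of `A` is needed; translate it to `0`. Some `x ≠ 0` is
  then the sum of only one pair, namely `0 + x`, so `A` misses exactly one coset `{w, w + x}` of
  `{0, x}` and meets every other coset, except `{0, x}` itself, in one point. Writing `w` and
  `w + x` as sums of two points of `A` determines `A` completely, and in the resulting
  configuration two different points can be dropped. At least one of them is not the point coming
  from `0 ∈ S ∪ {0}`, so `|S| = 7` is impossible.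
* If `V = U ⊕ W` with `U, W ≠ 0`, the set `(U ∪ W) \ {0}` is minimal 1-saturating: after removing
  `u ∈ U`, the point `u + w` is lost for any nonzero `w ∈ W`. This gives the sizes `6` and `8`,
  and a frame gives `5`.
-/

open Set Module
open scoped Pointwise

section Sumset

variable {G : Type*}

lemma natCard_le_choose_of_add_self_eq_univ [AddCommMagma G] {A : Set G} (hfin : A.Finite)
    (hA : A + A = univ) : Nat.card G ≤ (A.ncard + 1).choose 2 := by
  classical
  lift A to Finset G using hfin
  let sum : Sym2 G → G := Sym2.lift ⟨(· + ·), add_comm⟩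
  have hsurj : sum '' (A.sym2 : Set (Sym2 G)) = univ := by
    refine eq_univ_of_forall fun z => ?_
    obtain ⟨a, ha, b, hb, rfl⟩ : z ∈ (A + A : Set G) := hA ▸ mem_univ z
    exact ⟨s(a, b), Finset.mk_mem_sym2_iff.2 ⟨ha, hb⟩, rfl⟩
  calc Nat.card G = (sum '' (A.sym2 : Set (Sym2 G))).ncard := by rw [hsurj, ncard_univ]
    _ ≤ A.sym2.card := by rw [← ncard_coe_finset A.sym2]; exact ncard_image_le
    _ = ((A : Set G).ncard + 1).choose 2 := by rw [Finset.card_sym2, ncard_coe_finset]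

lemma add_eq_univ_of_natCard_lt [AddGroup G] [Finite G] {A B : Set G}
    (h : Nat.card G < A.ncard + B.ncard) : A + B = univ := by
  refine eq_univ_of_forall fun z => ?_
  have hinj : Function.Injective fun b : G => z - b := sub_right_injective
  obtain ⟨_, ha, b, hb, rfl⟩ : (A ∩ (z - ·) '' B).Nonempty :=
    nonempty_inter_of_lt_ncard_add_ncard (by rwa [ncard_image_of_injective B hinj])
  exact ⟨z - b, ha, b, hb, sub_add_cancel z b⟩

lemma add_self_eq_univ_of_insert [AddCommMagma G] {A : Set G} {v : G}
    (hA : insert v A + insert v A = univ) (hv : ∀ b ∈ insert v A, v + b ∈ A + A) :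
    A + A = univ := by
  refine eq_univ_of_forall fun z => ?_
  obtain ⟨a, ha, b, hb, rfl⟩ : z ∈ insert v A + insert v A := hA ▸ mem_univ z
  rcases ha with rfl | ha
  · exact hv b hb
  rcases hb with rfl | hb
  · simpa only [add_comm] using hv a (mem_insert_of_mem _ ha)
  · exact add_mem_add ha hb

lemma vadd_set_add_self_eq_univ_iff [AddCommGroup G] {A : Set G} (p : G) :
    (p +ᵥ A) + (p +ᵥ A) = univ ↔ A + A = univ := by
  rw [vadd_add_vadd_comm, vadd_set_eq_univ]

end Sumset

section ElementaryAbelian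

variable {V : Type*} [AddCommGroup V] [Module (ZMod 2) V] {A : Set V} {x w : V}

lemma add_add_self_cancel_right (u x : V) : u + x + x = u := by
  rw [add_assoc, ZModModule.add_self, add_zero]

lemma exists_unique_sum_of_sdiff_add_self_ne_univ {v : V} (hA : A + A = univ)
    (hnt : A.Nontrivial) (hv : v ∈ A) (hcrit : (A \ {v}) + (A \ {v}) ≠ univ) :
    ∃ x ≠ 0, v + x ∈ A ∧ ∀ u ∈ A, u + x ∈ A → u = v ∨ u = v + x := by
  obtain ⟨b, hb, hvb⟩ : ∃ b ∈ A, v + b ∉ (A \ {v}) + (A \ {v}) := by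
    contrapose! hcrit
    apply add_self_eq_univ_of_insert (v := v) <;> simpa [insert_eq_of_mem hv]
  have hcancel : ∀ u y : V, u + (u + y) = y := fun u y => by
    rw [← add_assoc, ZModModule.add_self, zero_add]
  refine ⟨v + b, fun h0 => ?_, by rwa [hcancel], fun u hu hux => ?_⟩
  · obtain ⟨d, hd, hdv⟩ := hnt.exists_ne v
    exact hvb (h0 ▸ ⟨d, ⟨hd, hdv⟩, d, ⟨hd, hdv⟩, ZModModule.add_self d⟩)
  · by_contra! hne
    refine hvb ⟨u, ⟨hu, hne.1⟩, u + (v + b), ⟨hux, fun huv => hne.2 ?_⟩, hcancel u _⟩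
    exact (eq_sub_of_add_eq huv).trans (ZModModule.sub_eq_add _ _)

lemma exists_pair_of_unique_sum [Finite V] {v : V} (hcard : Nat.card V = 2 * A.ncard)
    (hx : x ≠ 0) (hv : v ∈ A) (hvx : v + x ∈ A)
    (huniq : ∀ u ∈ A, u + x ∈ A → u = v ∨ u = v + x) :
    ∃ w, ∀ u, u ∈ A ∨ u + x ∈ A ↔ u ≠ w ∧ u ≠ w + x := by
  have hmem : ∀ u, u ∈ x +ᵥ A ↔ u + x ∈ A := fun u => by
    rw [mem_vadd_set_iff_neg_vadd_mem, ZModModule.neg_eq_self, vadd_eq_add, add_comm]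
  have hinter : A ∩ (x +ᵥ A) = {v, v + x} := by
    ext u
    rw [mem_inter_iff, hmem]
    constructor
    · exact fun hu => huniq u hu.1 hu.2
    · rintro (rfl | rfl)
      · exact ⟨hv, hvx⟩
      · exact ⟨hvx, (add_add_self_cancel_right v x).symm ▸ hv⟩
  have hcompl : (A ∪ (x +ᵥ A))ᶜ.ncard = 2 := by
    have hunion := ncard_union_add_ncard_inter A (x +ᵥ A)
    have htotal := ncard_add_ncard_compl (A ∪ (x +ᵥ A))
    rw [hinter, ncard_pair (by simpa using hx), ncard_vadd_set] at hunion
    omega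
  obtain ⟨w, w', -, hww⟩ := ncard_eq_two.1 hcompl
  have hout : ∀ u, ¬ (u ∈ A ∨ u + x ∈ A) ↔ u = w ∨ u = w' := fun u => by
    simpa [hmem] using Set.ext_iff.1 hww u
  obtain rfl : w + x = w' := by
    have hwx := hout (w + x)
    rw [add_add_self_cancel_right, or_comm, hout] at hwx
    simpa [hx] using hwx
  exact ⟨w, fun u => by rw [← not_or, ← hout, not_not]⟩

lemma exists_mem_add_mem (hA : A + A = univ) (hw : w ∉ A) (hwx : w + x ∉ A) :
    ∀ z ∈ ({w, w + x} : Set V), ∃ a ∉ ({0, x, w, w + x} : Set V), a ∈ A ∧ a + z ∈ A := by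
  intro z hz
  obtain ⟨a, ha, b, hb, rfl⟩ : z ∈ A + A := hA ▸ mem_univ z
  have ha2 := ZModModule.add_self a
  have hx2 := ZModModule.add_self x
  refine ⟨a, ?_, ha, ?_⟩ <;> grind

end ElementaryAbelian

section Octad

variable {V : Type*} [AddCommGroup V] {A : Set V} {x w a c : V}

/-- The normal form, up to translation, of an eight-point set `A` with `A + A = V` in a 16-point
space `V` such that removing some point of `A` (here translated to `0`) destroys this property.
The only sum of two points of `A` equal to `x` is `0 + x`, the cosets of `{0, x}` other than
`{0, x}` and `{w, w + x}` meet `A` once, and `{w, w + x}` misses `A`. -/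
def octad (x w a c : V) : Set V :=
  {a, 0, x, a + w, c, c + w + x, a + c, a + c + w}

lemma notMem_of_ncard_octad (hcard : (octad x w a c).ncard = 8) :
    a ∉ ({0, x, a + w, c, c + w + x, a + c, a + c + w} : Set V) := fun ha => by
  rw [octad, insert_eq_of_mem ha] at hcard
  have hle : ({0, x, a + w, c, c + w + x, a + c, a + c + w} : Set V).ncard ≤ 7 := by
    repeat refine (ncard_insert_le _ _).trans (Nat.succ_le_succ ?_)
    rw [ncard_singleton]
  omega

variable [Module (ZMod 2) V]

lemma octad_add_right : octad x w (a + w) c = octad x w a c := by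
  have hw : a + w + w = a := add_add_self_cancel_right a w
  have hc : a + w + c + w = a + c := by rw [add_right_comm, hw]
  ext u
  rw [octad, octad, hw, hc, add_right_comm a w c]
  simp only [mem_insert_iff, mem_singleton_iff]
  tauto

lemma add_self_eq_univ_of_octad (h : octad x w a c + octad x w a c = univ) :
    ({0, x, a + w, c, c + w + x, a + c, a + c + w} : Set V) +
      {0, x, a + w, c, c + w + x, a + c, a + c + w} = univ := by
  refine add_self_eq_univ_of_insert h ?_
  have hx := ZModModule.add_self x
  have hw := ZModModule.add_self w
  have ha := ZModModule.add_self a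
  have hc := ZModModule.add_self c
  simp only [forall_mem_insert, mem_singleton_iff, forall_eq]
  -- The `i`-th pair of witnesses sums to `a` plus the `i`-th point of the octad.
  refine ⟨⟨0, ?_, 0, ?_, ?_⟩, ⟨c, ?_, a + c, ?_, ?_⟩, ⟨c + w + x, ?_, a + c + w, ?_, ?_⟩,
    ⟨a + c, ?_, a + c + w, ?_, ?_⟩, ⟨0, ?_, a + c, ?_, ?_⟩, ⟨x, ?_, a + c + w, ?_, ?_⟩,
    ⟨0, ?_, c, ?_, ?_⟩, ⟨x, ?_, c + w + x, ?_, ?_⟩⟩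
  all_goals first | (simp; done) | grind

lemma octad_sdiff_add_self_eq_univ (hcard : (octad x w a c).ncard = 8)
    (h : octad x w a c + octad x w a c = univ) :
    (octad x w a c \ {a}) + (octad x w a c \ {a}) = univ := by
  rw [octad, insert_sdiff_self_of_notMem (notMem_of_ncard_octad hcard)]
  exact add_self_eq_univ_of_octad h

lemma exists_ne_octad_sdiff_add_self_eq_univ (hcard : (octad x w a c).ncard = 8)
    (h : octad x w a c + octad x w a c = univ) (p : V) :
    ∃ v ∈ octad x w a c, v ≠ p ∧ (octad x w a c \ {v}) + (octad x w a c \ {v}) = univ := by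
  have haw : a ≠ a + w := fun h => notMem_of_ncard_octad hcard (by simp [← h])
  by_cases hap : a = p
  · refine ⟨a + w, by simp [octad], hap ▸ haw.symm, ?_⟩
    rw [← octad_add_right] at hcard h ⊢
    exact octad_sdiff_add_self_eq_univ hcard h
  · exact ⟨a, mem_insert _ _, hap, octad_sdiff_add_self_eq_univ hcard h⟩

lemma ncard_octad (hx : x ≠ 0) (hw : w ∉ ({0, x} : Set V))
    (ha : a ∉ ({0, x, w, w + x} : Set V)) (hc : c ∉ ({0, x, w, w + x} : Set V))
    (hac : a + c ∉ ({0, x, w, w + x} : Set V)) : (octad x w a c).ncard = 8 := by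
  have hx2 := ZModModule.add_self x
  have hw2 := ZModModule.add_self w
  have ha2 := ZModModule.add_self a
  have hc2 := ZModModule.add_self c
  simp only [mem_insert_iff, mem_singleton_iff, not_or] at hw ha hc hac
  rw [octad]
  repeat rw [ncard_insert_of_notMem (by
    simp only [mem_insert_iff, mem_singleton_iff, not_or]; grind)]
  rw [ncard_singleton]

lemma exists_octad_generators (hA : A + A = univ) (hw : w ∉ A) (hwx : w + x ∉ A)
    (hhalf : ∀ u ∉ ({0, x, w, w + x} : Set V), u + x ∈ A ↔ u ∉ A) :
    ∃ a ∉ ({0, x, w, w + x} : Set V), ∃ c ∉ ({0, x, w, w + x} : Set V),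
      a + c ∉ ({0, x, w, w + x} : Set V) ∧
        a ∈ A ∧ a + w ∈ A ∧ c ∈ A ∧ c + w + x ∈ A ∧ a + c ∈ A := by
  have hpair := exists_mem_add_mem hA hw hwx
  obtain ⟨a, ha, haA, hawA⟩ := hpair w (by simp)
  obtain ⟨c, hc, hcA, hcwA⟩ := hpair (w + x) (by simp)
  rw [← add_assoc] at hcwA
  have ha2 := ZModModule.add_self a
  have hc2 := ZModModule.add_self c
  have hx2 := ZModModule.add_self x
  have hw2 := ZModModule.add_self w
  have haw : a + w ∉ ({0, x, w, w + x} : Set V) := by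
    simp only [mem_insert_iff, mem_singleton_iff] at ha ⊢; grind
  have hcwx : c + w + x ∉ ({0, x, w, w + x} : Set V) := by
    simp only [mem_insert_iff, mem_singleton_iff] at hc ⊢; grind
  -- Otherwise one coset of `{0, x}` through `a` or `a + w` would lie in `A`, against `hhalf`.
  have hac : a + c ∉ ({0, x, w, w + x} : Set V) := by
    simp only [mem_insert_iff, mem_singleton_iff]; grind
  have hacw : a + w + c ∉ ({0, x, w, w + x} : Set V) := by
    simp only [mem_insert_iff, mem_singleton_iff] at hac ⊢; grind
  have hacwx : a + (c + w + x) ∉ ({0, x, w, w + x} : Set V) := by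
    simp only [mem_insert_iff, mem_singleton_iff] at hac ⊢; grind
  -- If `a + c ∉ A`, replacing `a` by `a + w` or `c` by `c + w + x` puts the new sum in `A`.
  by_cases hacA : a + c ∈ A
  · exact ⟨a, ha, c, hc, hac, haA, hawA, hcA, hcwA, hacA⟩
  by_cases hawcA : a + w + c ∈ A
  · exact ⟨a + w, haw, c, hc, hacw, hawA, by grind, hcA, hcwA, hawcA⟩
  · have hacwxA : a + (c + w + x) ∈ A := by grind
    exact ⟨a, ha, c + w + x, hcwx, hacwx, haA, hawA, hcwA, by grind, hacwxA⟩

lemma exists_eq_octad (hA : A + A = univ) (hcard : A.ncard = 8) (h0 : 0 ∈ A)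
    (hx : x ∈ A) (hx0 : x ≠ 0) (hw : w ∉ A) (hwx : w + x ∉ A)
    (hhalf : ∀ u ∉ ({0, x, w, w + x} : Set V), u + x ∈ A ↔ u ∉ A) :
    ∃ w' a c, A = octad x w' a c := by
  have eq_octad : ∀ {w' a c : V}, w' ∉ A → a ∉ ({0, x, w', w' + x} : Set V) →
      c ∉ ({0, x, w', w' + x} : Set V) → a + c ∉ ({0, x, w', w' + x} : Set V) →
      octad x w' a c ⊆ A → A = octad x w' a c := by
    intro w' a c hw' ha hc hac hsub
    have hw'x : w' ∉ ({0, x} : Set V) := by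
      rintro (rfl | rfl)
      exacts [hw' h0, hw' hx]
    have hfin : A.Finite := finite_of_ncard_ne_zero (by omega)
    refine (eq_of_subset_of_ncard_le hsub ?_ hfin).symm
    rw [hcard, ncard_octad hx0 hw'x ha hc hac]
  obtain ⟨a, ha, c, hc, hac, haA, hawA, hcA, hcwA, hacA⟩ :=
    exists_octad_generators hA hw hwx hhalf
  have hK : ({0, x, w + x, w + x + x} : Set V) = {0, x, w, w + x} := by
    rw [add_add_self_cancel_right, pair_comm (w + x)]
  have hacw : a + c + w ∉ ({0, x, w, w + x} : Set V) := by
    have hw2 := ZModModule.add_self w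
    have hx2 := ZModModule.add_self x
    simp only [mem_insert_iff, mem_singleton_iff] at hac ⊢; grind
  by_cases hacwA : a + c + w ∈ A
  · refine ⟨w, a, c, eq_octad hw ha hc hac ?_⟩
    simp only [octad, insert_subset_iff, singleton_subset_iff]
    exact ⟨haA, h0, hx, hawA, hcA, hcwA, hacA, hacwA⟩
  · have hacwxA := (hhalf _ hacw).2 hacwA
    refine ⟨w + x, c, a, eq_octad hwx (by rwa [hK]) (by rwa [hK])
      (by rwa [hK, add_comm c]) ?_⟩
    simp only [octad, insert_subset_iff, singleton_subset_iff, add_comm c a, ← add_assoc,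
      add_add_self_cancel_right]
    exact ⟨hcA, h0, hx, hcwA, haA, hawA, hacA, hacwxA⟩

lemma exists_eq_octad_of_sdiff_add_self_ne_univ (hV : Nat.card V = 16)
    (hA : A + A = univ) (hcard : A.ncard = 8) (h0 : 0 ∈ A)
    (hcrit : (A \ {0}) + (A \ {0}) ≠ univ) :
    ∃ x w a c, A = octad x w a c := by
  have : Finite V := Nat.finite_of_card_ne_zero (by omega)
  have hnt : A.Nontrivial := one_lt_ncard_iff_nontrivial.1 (by omega)
  obtain ⟨x, hx0, hx, huniq⟩ := exists_unique_sum_of_sdiff_add_self_ne_univ hA hnt h0 hcrit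
  obtain ⟨w, hw⟩ := exists_pair_of_unique_sum (by omega) hx0 h0 hx huniq
  simp only [zero_add] at hx huniq
  have hwA : w ∉ A ∧ w + x ∉ A := by simpa using (hw w).not
  refine ⟨x, exists_eq_octad hA hcard h0 hx hx0 hwA.1 hwA.2 fun u hu => ?_⟩
  simp only [mem_insert_iff, mem_singleton_iff, not_or] at hu
  grind

lemma exists_ne_sdiff_add_self_eq_univ (hV : Nat.card V = 16) (hA : A + A = univ)
    (hcard : A.ncard = 8) (p : V) :
    ∃ v ∈ A, v ≠ p ∧ (A \ {v}) + (A \ {v}) = univ := by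
  have : Finite V := Nat.finite_of_card_ne_zero (by omega)
  by_cases hcrit : ∃ v ∈ A, (A \ {v}) + (A \ {v}) ≠ univ
  · obtain ⟨v, hv, hcrit⟩ := hcrit
    have hsdiff : ∀ u, v +ᵥ (A \ {u}) = (v +ᵥ A) \ {v + u} := fun u => by
      rw [vadd_set_sdiff, vadd_set_singleton, vadd_eq_add]
    have hB : (v +ᵥ A) + (v +ᵥ A) = univ := (vadd_set_add_self_eq_univ_iff v).2 hA
    have hBcard : (v +ᵥ A).ncard = 8 := by rw [ncard_vadd_set, hcard]
    have hB0 : 0 ∈ v +ᵥ A := ⟨v, hv, ZModModule.add_self v⟩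
    rw [Ne, ← vadd_set_add_self_eq_univ_iff v, hsdiff, ZModModule.add_self] at hcrit
    obtain ⟨x, w, a, c, hoct⟩ :=
      exists_eq_octad_of_sdiff_add_self_ne_univ hV hB hBcard hB0 hcrit
    obtain ⟨_, ⟨u, hu, rfl⟩, hup, hdrop⟩ : ∃ b ∈ v +ᵥ A, b ≠ v + p ∧
        ((v +ᵥ A) \ {b}) + ((v +ᵥ A) \ {b}) = univ := by
      rw [hoct] at hB hBcard ⊢
      exact exists_ne_octad_sdiff_add_self_eq_univ hBcard hB (v + p)
    refine ⟨u, hu, ne_of_apply_ne (v + ·) hup, (vadd_set_add_self_eq_univ_iff v).1 ?_⟩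
    rwa [hsdiff]
  · push Not at hcrit
    obtain ⟨v, hv, hvp⟩ := (one_lt_ncard_iff_nontrivial.1 (by omega : 1 < A.ncard)).exists_ne p
    exact ⟨v, hv, hvp, hcrit v hv⟩

end Octad

section Complement

section Semiring

variable {R M : Type*} [Semiring R] [AddCommMonoid M] [Module R M] {U W : Submodule R M}

lemma coe_union_add_coe_union_eq_univ (hUW : Codisjoint U W) :
    (U ∪ W : Set M) + (U ∪ W : Set M) = univ := by
  refine eq_univ_of_forall fun x => ?_
  obtain ⟨u, hu, w, hw, rfl⟩ := Submodule.mem_sup.1 (hUW.eq_top ▸ Submodule.mem_top : x ∈ U ⊔ W)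
  exact add_mem_add (.inl hu) (.inr hw)

lemma ncard_union_sdiff_zero [Finite M] (hUW : Disjoint U W) :
    ((U ∪ W : Set M) \ {0}).ncard = Nat.card U + Nat.card W - 2 := by
  have hinter : (U ∩ W : Set M) = {0} := by
    rw [← Submodule.coe_inf, hUW.eq_bot, Submodule.bot_coe]
  have hunion := ncard_union_add_ncard_inter (U : Set M) W
  rw [hinter, ncard_singleton] at hunion
  rw [ncard_sdiff_singleton_of_mem (.inl U.zero_mem)]
  change _ = (U : Set M).ncard + (W : Set M).ncard - 2
  omega

end Semiring

section Ring

variable {R M : Type*} [Ring R] [AddCommGroup M] [Module R M] {U W : Submodule R M}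

lemma eq_or_eq_of_add_eq_add_of_disjoint (hUW : Disjoint U W) {u w a b : M} (hu : u ∈ U)
    (hu0 : u ≠ 0) (hw : w ∈ W) (hw0 : w ≠ 0) (ha : a ∈ (U ∪ W : Set M)) (hb : b ∈ (U ∪ W : Set M))
    (h : a + b = u + w) : a = u ∨ b = u := by
  have hzero : ∀ {y}, y ∈ U → y ∈ W → y = 0 := fun {y} => Submodule.disjoint_def.1 hUW y
  have eq_left : ∀ {a b}, a ∈ U → b ∈ W → a + b = u + w → a = u := fun {a b} ha hb h =>
    sub_eq_zero.1 <| hzero (U.sub_mem ha hu) <| by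
      rw [sub_eq_sub_iff_add_eq_add.2 (h.trans (add_comm u w))]
      exact W.sub_mem hw hb
  rcases ha with ha | ha <;> rcases hb with hb | hb
  · have hwU := (U.add_mem_iff_right hu).1 (h ▸ U.add_mem ha hb)
    exact absurd (hzero hwU hw) hw0
  · exact .inl (eq_left ha hb h)
  · exact .inr (eq_left hb ha (by rwa [add_comm]))
  · have huW := (W.add_mem_iff_left hw).1 (h ▸ W.add_mem ha hb)
    exact absurd (hzero hu huW) hu0

lemma sdiff_singleton_add_self_ne_univ_of_isCompl (hUW : IsCompl U W) (hU : U ≠ ⊥) (hW : W ≠ ⊥)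
    {s : M} (hs : s ∈ (U ∪ W : Set M)) (hs0 : s ≠ 0) :
    ((U ∪ W : Set M) \ {s}) + ((U ∪ W : Set M) \ {s}) ≠ univ := by
  wlog hsU : s ∈ U generalizing U W
  · rw [union_comm]
    exact this hUW.symm hW hU hs.symm (hs.resolve_left hsU)
  obtain ⟨w, hw, hw0⟩ := W.exists_mem_ne_zero_of_ne_bot hW
  intro h
  obtain ⟨a, ha, b, hb, hab⟩ : s + w ∈ ((U ∪ W : Set M) \ {s}) + ((U ∪ W : Set M) \ {s}) :=
    h ▸ mem_univ _
  exact (eq_or_eq_of_add_eq_add_of_disjoint hUW.disjoint hsU hs0 hw hw0 ha.1 hb.1 hab).elim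
    ha.2 hb.2

end Ring

end Complement

section Saturating

variable {n : ℕ} {S : Set (Fin n → ZMod 2)}

lemma saturating_iff_insert_zero_add_self_eq_univ :
    Saturating S ↔ 0 ∉ S ∧ insert 0 S + insert 0 S = univ := by
  have hne : (∀ s ∈ S, s ≠ 0) ↔ 0 ∉ S :=
    ⟨fun h h0 => h 0 h0 rfl, fun h s hs => ne_of_mem_of_not_mem hs h⟩
  rw [Saturating, hne, eq_univ_iff_forall]
  refine and_congr_right fun _ => forall_congr' fun x => ⟨fun h => ?_, ?_⟩
  · by_cases hx0 : x = 0
    · exact ⟨0, mem_insert _ _, 0, mem_insert _ _, by simp [hx0]⟩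
    by_cases hxS : x ∈ S
    · exact ⟨0, mem_insert _ _, x, mem_insert_of_mem _ hxS, zero_add x⟩
    · obtain ⟨a, ha, b, hb, -, rfl⟩ := h hx0 hxS
      exact add_mem_add (mem_insert_of_mem _ ha) (mem_insert_of_mem _ hb)
  · rintro ⟨a, rfl | ha, b, rfl | hb, rfl⟩ hx0 hxS
    · simp at hx0
    · simp [hb] at hxS
    · simp [ha] at hxS
    · refine ⟨a, ha, b, hb, ?_, rfl⟩
      rintro rfl
      exact hx0 (ZModModule.add_self a)

lemma minSat_iff_insert_zero_add_self_eq_univ :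
    MinSat S ↔ 0 ∉ S ∧ insert 0 S + insert 0 S = univ ∧
      ∀ s ∈ S, (insert 0 S \ {s}) + (insert 0 S \ {s}) ≠ univ := by
  rw [MinSat, saturating_iff_insert_zero_add_self_eq_univ, and_assoc]
  refine and_congr_right fun h0 => and_congr_right fun _ => forall₂_congr fun s hs => ?_
  rw [saturating_iff_insert_zero_add_self_eq_univ,
    insert_sdiff_singleton_comm (ne_of_mem_of_not_mem hs h0).symm]
  simp [h0]

lemma Saturating.two_pow_le_choose (hS : Saturating S) : 2 ^ n ≤ (S.ncard + 2).choose 2 := by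
  obtain ⟨h0, hA⟩ := saturating_iff_insert_zero_add_self_eq_univ.1 hS
  simpa [ncard_insert_of_notMem h0] using
    natCard_le_choose_of_add_self_eq_univ (toFinite (insert 0 S)) hA

lemma Saturating.five_le_ncard {S : Set (Fin 4 → ZMod 2)} (hS : Saturating S) :
    5 ≤ S.ncard := by
  by_contra! hlt
  have hle := hS.two_pow_le_choose.trans (Nat.choose_le_choose 2 (by omega : S.ncard + 2 ≤ 6))
  norm_num [Nat.choose] at hle

lemma saturating_of_two_pow_le_ncard {S : Set (Fin (n + 1) → ZMod 2)} (h0 : 0 ∉ S)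
    (hcard : 2 ^ n ≤ S.ncard) : Saturating S := by
  refine saturating_iff_insert_zero_add_self_eq_univ.2 ⟨h0, add_eq_univ_of_natCard_lt ?_⟩
  rw [ncard_insert_of_notMem h0, Nat.card_eq_fintype_card, Fintype.card_fun, ZMod.card,
    Fintype.card_fin]
  omega

lemma MinSat.ncard_le_two_pow {S : Set (Fin (n + 1) → ZMod 2)} (hS : MinSat S) :
    S.ncard ≤ 2 ^ n := by
  by_contra! hlt
  obtain ⟨s, hs⟩ : S.Nonempty := nonempty_of_ncard_ne_zero (Nat.ne_zero_of_lt hlt)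
  refine hS.2 s hs (saturating_of_two_pow_le_ncard (fun h0 => hS.1.1 0 h0.1 rfl) ?_)
  rw [ncard_sdiff_singleton_of_mem hs]
  omega

lemma MinSat.ncard_ne_seven {S : Set (Fin 4 → ZMod 2)} (hS : MinSat S) : S.ncard ≠ 7 := by
  intro hcard
  obtain ⟨h0, hA, hmin⟩ := minSat_iff_insert_zero_add_self_eq_univ.1 hS
  obtain ⟨s, hs, hs0, hdrop⟩ := exists_ne_sdiff_add_self_eq_univ (by simp) hA
    (by rw [ncard_insert_of_notMem h0, hcard]) 0
  exact hmin s (hs.resolve_left hs0) hdrop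

lemma minSat_union_sdiff_zero {U W : Submodule (ZMod 2) (Fin n → ZMod 2)} (hUW : IsCompl U W)
    (hU : U ≠ ⊥) (hW : W ≠ ⊥) : MinSat ((U ∪ W : Set (Fin n → ZMod 2)) \ {0}) := by
  have h0 : (0 : Fin n → ZMod 2) ∈ (U ∪ W : Set (Fin n → ZMod 2)) := .inl U.zero_mem
  rw [minSat_iff_insert_zero_add_self_eq_univ, insert_sdiff_self_of_mem h0]
  exact ⟨fun h => h.2 rfl, coe_union_add_coe_union_eq_univ hUW.codisjoint, fun s hs =>
    sdiff_singleton_add_self_ne_univ_of_isCompl hUW hU hW hs.1 hs.2⟩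

lemma exists_minSat_ncard_eq {i j : ℕ} (hi : i ≠ 0) (hj : j ≠ 0) :
    ∃ S : Set (Fin (i + j) → ZMod 2), MinSat S ∧ S.ncard = 2 ^ i + 2 ^ j - 2 := by
  obtain ⟨f, hf⟩ := exists_linearIndependent_of_le_finrank (R := ZMod 2)
    (M := Fin (i + j) → ZMod 2) (n := i) (by simp)
  let U := Submodule.span (ZMod 2) (range f)
  have hU : finrank (ZMod 2) U = i := by simpa using finrank_span_eq_card hf
  obtain ⟨W, hUW⟩ := U.exists_isCompl
  have hW : finrank (ZMod 2) W = j := by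
    have hsum := Submodule.finrank_add_eq_of_isCompl hUW
    rw [hU, finrank_fin_fun] at hsum
    omega
  refine ⟨(U ∪ W) \ {0}, minSat_union_sdiff_zero hUW ?_ ?_, ?_⟩
  · rwa [Ne, ← Submodule.finrank_eq_zero, hU]
  · rwa [Ne, ← Submodule.finrank_eq_zero, hW]
  · rw [ncard_union_sdiff_zero hUW.disjoint, natCard_eq_pow_finrank (K := ZMod 2) (V := U),
      natCard_eq_pow_finrank (K := ZMod 2) (V := W), hU, hW, Nat.card_zmod]

lemma Saturating.minSat_of_choose_lt (hS : Saturating S)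
    (hcard : (S.ncard + 1).choose 2 < 2 ^ n) : MinSat S := by
  refine ⟨hS, fun s hs hsat => ?_⟩
  have hle := hsat.two_pow_le_choose
  rw [← ncard_sdiff_singleton_add_one hs] at hcard
  exact hle.not_gt hcard

lemma exists_minSat_ncard_eq_five : ∃ S : Set (Fin 4 → ZMod 2), MinSat S ∧ S.ncard = 5 := by
  let S : Finset (Fin 4 → ZMod 2) :=
    {![1, 0, 0, 0], ![0, 1, 0, 0], ![0, 0, 1, 0], ![0, 0, 0, 1], ![1, 1, 1, 1]}
  have hcard : (S : Set (Fin 4 → ZMod 2)).ncard = 5 := by rw [ncard_coe_finset]; decide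
  have hS : Saturating (S : Set (Fin 4 → ZMod 2)) := by
    simp only [Saturating, Finset.mem_coe]
    decide +kernel
  exact ⟨S, hS.minSat_of_choose_lt (by rw [hcard]; decide), hcard⟩

end Saturating

/-- The possible sizes of minimal 1-saturating sets in PG(3,2) are exactly 5, 6 and 8. -/
theorem minSat_PG3_sizes (k : ℕ) :
    (∃ S : Set (Fin 4 → ZMod 2), MinSat S ∧ S.ncard = k) ↔ k = 5 ∨ k = 6 ∨ k = 8 := by
  constructor
  · rintro ⟨S, hS, rfl⟩
    have hlower : 5 ≤ S.ncard := hS.1.five_le_ncard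
    have hupper : S.ncard ≤ 8 := hS.ncard_le_two_pow
    have hseven : S.ncard ≠ 7 := hS.ncard_ne_seven
    omega
  · rintro (rfl | rfl | rfl)
    · exact exists_minSat_ncard_eq_five
    · exact exists_minSat_ncard_eq two_ne_zero two_ne_zero
    · exact exists_minSat_ncard_eq one_ne_zero three_ne_zero
end

section
/- Up to projective equivalence there are exactly four minimal 1-saturating sets in PG(3,2): the number of orbits of the action of GL(4, ZMod 2) on the collection of minimal 1-saturating sets of nonzero vectors of (ZMod 2)^4 is exactly 4 (one of size 5, one of size 6 and two of size 8). -/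
/-!
A complete cap is minimal, since a point of a cap is not the sum of two others; this gives the
frame of five points and the complement of a hyperplane. The points of two complementary nonzero
subspaces also form a minimal set, because `u + w` decomposes uniquely; dimensions 2 + 2 and 3 + 1
give two skew lines and a plane with a point outside it.

Conversely, a saturating set `S` spans, so it may be assumed to contain the coordinate vectors. If
the all-ones vector is in `S`, there is a frame. Otherwise it is a sum `a + b` in `S`, and up to a
permutation of the coordinates either `a = 1100` and `b = 0011`, so that `S` contains two skew
lines, or `1110` is in `S`. In this last case `S` contains a quadrangle in a plane and a point `d`
outside it. If `S` contains no frame, then saturation at the points `y + d`, for `y` on the line of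
diagonal points of the quadrangle, forces `S` to contain either that whole line, hence the plane
and `d`, or all the points `y + d`, hence all vectors of odd weight. By minimality `S` equals the
configuration it contains.
-/

variable {n : ℕ} {S T : Set (Fin n → ZMod 2)}

lemma Saturating.mono (hS : Saturating S) (hST : S ⊆ T) (hT : ∀ t ∈ T, t ≠ 0) :
    Saturating T := by
  refine ⟨hT, fun x hx hxT => ?_⟩
  obtain ⟨a, ha, b, hb, hab, rfl⟩ := hS.2 x hx (fun h => hxT (hST h))
  exact ⟨a, hST ha, b, hST hb, hab, rfl⟩

lemma MinSat.eq_of_subset (hS : MinSat S) (hT : Saturating T) (hTS : T ⊆ S) : T = S := by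
  refine hTS.antisymm fun s hs => ?_
  by_contra hsT
  exact hS.2 s hs (hT.mono (Set.subset_sdiff_singleton hTS hsT) fun t ht => hS.1.1 t ht.1)

lemma CompleteCap.minSat (hS : CompleteCap S) : MinSat S := by
  refine ⟨hS.2, fun s hs hsat => ?_⟩
  obtain ⟨a, ha, b, hb, hab, rfl⟩ := hsat.2 s (hS.1.1 s hs) (fun h => h.2 rfl)
  exact hS.1.2 a ha.1 b hb.1 (a + b) hs hab ha.2 hb.2 (ZModModule.add_self _)

lemma Saturating.image (hS : Saturating S) (e : (Fin n → ZMod 2) ≃ₗ[ZMod 2] (Fin n → ZMod 2)) :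
    Saturating (e '' S) := by
  refine ⟨?_, e.surjective.forall.2 fun x hx hxS => ?_⟩
  · rintro _ ⟨s, hs, rfl⟩
    exact e.map_ne_zero_iff.2 (hS.1 s hs)
  · rw [e.injective.mem_set_image] at hxS
    obtain ⟨a, ha, b, hb, hab, rfl⟩ := hS.2 x (e.map_ne_zero_iff.1 hx) hxS
    exact ⟨e a, ⟨a, ha, rfl⟩, e b, ⟨b, hb, rfl⟩, e.injective.ne hab, map_add e a b⟩

lemma Saturating.span_eq_top (hS : Saturating S) : Submodule.span (ZMod 2) S = ⊤ := by
  refine eq_top_iff.2 fun x _ => ?_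
  rcases eq_or_ne x 0 with rfl | hx
  · exact zero_mem _
  by_cases hxS : x ∈ S
  · exact Submodule.subset_span hxS
  obtain ⟨a, ha, b, hb, -, rfl⟩ := hS.2 x hx hxS
  exact add_mem (Submodule.subset_span ha) (Submodule.subset_span hb)

lemma projEquiv_iff_exists_linearEquiv :
    ProjEquiv S T ↔ ∃ e : (Fin n → ZMod 2) ≃ₗ[ZMod 2] (Fin n → ZMod 2), e '' S = T :=
  (Matrix.GeneralLinearGroup.toLin.toEquiv.trans
    (LinearMap.GeneralLinearGroup.generalLinearEquiv (ZMod 2) (Fin n → ZMod 2)).toEquiv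
    ).exists_congr fun _ => Iff.rfl

lemma ProjEquiv.symm (h : ProjEquiv S T) : ProjEquiv T S := by
  obtain ⟨e, rfl⟩ := projEquiv_iff_exists_linearEquiv.1 h
  exact projEquiv_iff_exists_linearEquiv.2 ⟨e.symm, e.toEquiv.symm_image_image S⟩

lemma ProjEquiv.ncard_eq (h : ProjEquiv S T) : S.ncard = T.ncard := by
  obtain ⟨e, rfl⟩ := projEquiv_iff_exists_linearEquiv.1 h
  exact (Set.ncard_image_of_injective S e.injective).symm

lemma ProjEquiv.isCap (h : ProjEquiv S T) (hS : IsCap S) : IsCap T := by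
  obtain ⟨e, rfl⟩ := projEquiv_iff_exists_linearEquiv.1 h
  simpa [IsCap, ← map_add] using hS

/-- `ContainsCopy T S`: some invertible linear map sends `T` into `S`. -/
def ContainsCopy (T S : Set (Fin n → ZMod 2)) : Prop :=
  ∃ e : (Fin n → ZMod 2) ≃ₗ[ZMod 2] (Fin n → ZMod 2), Set.MapsTo e T S

lemma ContainsCopy.of_preimage {e : (Fin n → ZMod 2) ≃ₗ[ZMod 2] (Fin n → ZMod 2)}
    (h : ContainsCopy T (e ⁻¹' S)) : ContainsCopy T S :=
  let ⟨f, hf⟩ := h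
  ⟨f.trans e, hf⟩

lemma MinSat.projEquiv_of_containsCopy (hS : MinSat S) (hT : Saturating T)
    (h : ContainsCopy T S) : ProjEquiv S T := by
  obtain ⟨e, he⟩ := h
  exact ProjEquiv.symm
    (projEquiv_iff_exists_linearEquiv.2 ⟨e, hS.eq_of_subset (hT.image e) he.image_subset⟩)

section HyperplaneComplement

variable {φ : Module.Dual (ZMod 2) (Fin n → ZMod 2)}

lemma saturating_setOf_apply_eq_one (hφ : φ ≠ 0) : Saturating {x | φ x = 1} := by
  refine ⟨?_, fun x hx hxφ => ?_⟩
  · rintro _ hs rfl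
    simp at hs
  · obtain ⟨s, hs⟩ : ∃ s, φ s = 1 := (LinearMap.surjective hφ) 1
    have hxφ : φ x = 0 := by_contra fun h => hxφ (Fin.eq_one_of_ne_zero (φ x) h)
    refine ⟨s, hs, x + s, by simp [hxφ, hs], by simpa using hx, ?_⟩
    rw [add_left_comm, ZModModule.add_self, add_zero]

lemma isCap_setOf_apply_eq_one : IsCap {x | φ x = 1} := by
  refine ⟨?_, fun a ha b hb c hc _ _ _ h => ?_⟩
  · rintro _ hs rfl
    simp at hs
  · have : (1 + 1 + 1 : ZMod 2) = 0 := by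
      simpa only [map_add, map_zero, ha.out, hb.out, hc.out] using congrArg φ h
    exact absurd this (by decide)

end HyperplaneComplement

section ComplementarySubspaces

variable {U W : Submodule (ZMod 2) (Fin n → ZMod 2)}

lemma saturating_union_of_codisjoint (h : Codisjoint U W) :
    Saturating (((U : Set (Fin n → ZMod 2)) ∪ W) \ {0}) := by
  refine ⟨fun s hs => hs.2, fun x hx hxS => ?_⟩
  obtain ⟨u, w, hu, hw, rfl⟩ := Submodule.codisjoint_iff_exists_add_eq.1 h x
  refine ⟨u, ⟨Or.inl hu, ?_⟩, w, ⟨Or.inr hw, ?_⟩, ?_, rfl⟩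
  · rintro rfl
    exact hxS ⟨Or.inr (by simpa using hw), hx⟩
  · rintro rfl
    exact hxS ⟨Or.inl (by simpa using hu), hx⟩
  · rintro rfl
    exact hx (ZModModule.add_self u)

/-- Within `U ∪ W`, the vector `u + w` is the sum of two points only as `u` plus `w`. -/
lemma Saturating.mem_and_mem_of_disjoint (hS : Saturating S) (hUW : Disjoint U W)
    (hSUW : S ⊆ (U : Set (Fin n → ZMod 2)) ∪ W) {u w : Fin n → ZMod 2}
    (hu : u ∈ U) (hw : w ∈ W) (hu0 : u ≠ 0) (hw0 : w ≠ 0) : u ∈ S ∧ w ∈ S := by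
  have huW : u ∉ W := fun h => hu0 (Submodule.disjoint_def.1 hUW u hu h)
  have hwU : w ∉ U := fun h => hw0 (Submodule.disjoint_def.1 hUW w h hw)
  have sum_notMem_U : u + w ∉ U := fun h => hwU ((U.add_mem_iff_right hu).1 h)
  have sum_notMem_W : u + w ∉ W := fun h => huW ((W.add_mem_iff_left hw).1 h)
  have unique {a b : Fin n → ZMod 2} (ha : a ∈ U) (hb : b ∈ W) (hab : u + w = a + b) :
      u = a ∧ w = b := by
    have hdiff : u - a = b - w := by rw [sub_eq_sub_iff_add_eq_add, hab, add_comm]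
    have hua : u - a = 0 :=
      Submodule.disjoint_def.1 hUW _ (U.sub_mem hu ha) (hdiff ▸ W.sub_mem hb hw)
    exact ⟨sub_eq_zero.1 hua, (sub_eq_zero.1 (hdiff ▸ hua)).symm⟩
  obtain ⟨a, ha, b, hb, -, hab⟩ := hS.2 (u + w)
    (fun h => sum_notMem_U (h ▸ U.zero_mem)) (fun h => (hSUW h).elim sum_notMem_U sum_notMem_W)
  rcases hSUW ha with haU | haW <;> rcases hSUW hb with hbU | hbW
  · exact absurd (hab ▸ U.add_mem haU hbU) sum_notMem_U
  · obtain ⟨rfl, rfl⟩ := unique haU hbW hab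
    exact ⟨ha, hb⟩
  · obtain ⟨rfl, rfl⟩ := unique hbU haW (hab.trans (add_comm a b))
    exact ⟨hb, ha⟩
  · exact absurd (hab ▸ W.add_mem haW hbW) sum_notMem_W

lemma minSat_union_of_isCompl (h : IsCompl U W) (hU : U ≠ ⊥) (hW : W ≠ ⊥) :
    MinSat (((U : Set (Fin n → ZMod 2)) ∪ W) \ {0}) := by
  obtain ⟨u, hu, hu0⟩ := U.ne_bot_iff.1 hU
  obtain ⟨w, hw, hw0⟩ := W.ne_bot_iff.1 hW
  refine ⟨saturating_union_of_codisjoint h.codisjoint, ?_⟩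
  rintro s ⟨hsU | hsW, hs0⟩ hsat
  · exact (hsat.mem_and_mem_of_disjoint h.disjoint (fun x hx => hx.1.1) hsU hw hs0 hw0).1.2 rfl
  · exact (hsat.mem_and_mem_of_disjoint h.disjoint (fun x hx => hx.1.1) hu hsW hu0 hs0).2.2 rfl

end ComplementarySubspaces

lemma exists_linearEquiv_forall_mem_of_span_eq_top {K : Type*} [Field K] {S : Set (Fin n → K)}
    (h : Submodule.span K S = ⊤) :
    ∃ e : (Fin n → K) ≃ₗ[K] (Fin n → K), ∀ i, e (Pi.single i 1) ∈ S := by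
  let b := Module.Basis.ofSpan h.ge
  let σ := (Pi.basisFun K (Fin n)).indexEquiv b
  refine ⟨(Pi.basisFun K (Fin n)).equiv b σ, fun i => Module.Basis.ofSpan_subset h.ge ⟨σ i, ?_⟩⟩
  rw [← Pi.basisFun_apply, Module.Basis.equiv_apply]

/-- The points of a frame of `PG(n-1,2)`: the coordinate vectors and their sum. -/
def standardFrame (n : ℕ) : Set (Fin n → ZMod 2) :=
  insert 1 (Set.range fun i => Pi.single i 1)

lemma containsCopy_standardFrame {v : Fin n → Fin n → ZMod 2}
    (hv : LinearIndependent (ZMod 2) v) (hvS : ∀ i, v i ∈ S) (hsum : ∑ i, v i ∈ S) :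
    ContainsCopy (standardFrame n) S := by
  let b := Module.Basis.mk hv (hv.span_eq_top_of_card_eq_finrank' (by simp)).ge
  refine ⟨b.equivFun.symm, ?_⟩
  rintro _ (rfl | ⟨i, rfl⟩)
  · simpa [b, Module.Basis.equivFun_symm_apply] using hsum
  · simpa [b, Module.Basis.equivFun_symm_apply, Pi.single_apply] using hvS i

/-- The odd-weight vectors: the complement of the hyperplane `∑ i, x i = 0`. -/
def oddVectors (n : ℕ) : Set (Fin n → ZMod 2) := {x | ∑ i, x i = 1}

/-- The points of the coordinate subspaces `x i = 0` for `i ∈ I` and `x i = 0` for `i ∉ I`. -/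
def coordSplit (I : Finset (Fin n)) : Set (Fin n → ZMod 2) :=
  {x | x ≠ 0 ∧ ((∀ i ∈ I, x i = 0) ∨ ∀ i ∉ I, x i = 0)}

instance (n : ℕ) : DecidablePred (· ∈ standardFrame n) := fun x =>
  inferInstanceAs (Decidable (x = 1 ∨ ∃ i, Pi.single i 1 = x))

instance (n : ℕ) : DecidablePred (· ∈ oddVectors n) := fun x =>
  inferInstanceAs (Decidable (∑ i, x i = 1))

instance (I : Finset (Fin n)) : DecidablePred (· ∈ coordSplit I) := fun x =>
  inferInstanceAs (Decidable (x ≠ 0 ∧ ((∀ i ∈ I, x i = 0) ∨ ∀ i ∉ I, x i = 0)))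

lemma completeCap_oddVectors [NeZero n] : CompleteCap (oddVectors n) := by
  let φ : Module.Dual (ZMod 2) (Fin n → ZMod 2) := ∑ i, LinearMap.proj i
  have hφ (x : Fin n → ZMod 2) : φ x = ∑ i, x i := by simp [φ]
  have hφ0 : φ ≠ 0 := fun h => by simpa [hφ] using LinearMap.congr_fun h (Pi.single 0 1)
  have hodd : oddVectors n = {x | φ x = 1} := by simp only [oddVectors, hφ]
  exact hodd ▸ ⟨isCap_setOf_apply_eq_one, saturating_setOf_apply_eq_one hφ0⟩

lemma isCompl_pi_bot_compl {ι R : Type*} [Semiring R] {M : ι → Type*} [∀ i, AddCommMonoid (M i)]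
    [∀ i, Module R (M i)] (I : Set ι) :
    IsCompl (Submodule.pi I fun i => (⊥ : Submodule R (M i))) (Submodule.pi Iᶜ fun _ => ⊥) := by
  classical
  constructor
  · refine Submodule.disjoint_def.2 fun x hx hx' => funext fun i => ?_
    exact (em (i ∈ I)).elim (hx i) (hx' i)
  · refine Submodule.codisjoint_iff_exists_add_eq.2 fun x =>
      ⟨I.piecewise 0 x, I.piecewise x 0, fun i hi => ?_, fun i hi => ?_, ?_⟩
    · simp [hi]
    · simp [Set.notMem_of_mem_compl hi]
    · ext i
      by_cases hi : i ∈ I <;> simp [hi]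

lemma minSat_coordSplit {I : Finset (Fin n)} (hI : I.Nonempty) (hI' : Iᶜ.Nonempty) :
    MinSat (coordSplit I) := by
  obtain ⟨i, hi⟩ := hI
  obtain ⟨j, hj⟩ := hI'
  rw [Finset.mem_compl] at hj
  have h := minSat_union_of_isCompl (isCompl_pi_bot_compl (I : Set (Fin n)))
    ((Submodule.ne_bot_iff _).2 ⟨Pi.single j (1 : ZMod 2), fun k hk =>
      Pi.single_eq_of_ne (ne_of_mem_of_not_mem hk hj) _, by simp⟩)
    ((Submodule.ne_bot_iff _).2 ⟨Pi.single i (1 : ZMod 2), fun k hk =>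
      Pi.single_eq_of_ne (ne_of_mem_of_not_mem hi hk).symm _, by simp⟩)
  convert h using 1
  ext x
  simp [coordSplit, and_comm]

instance (S : Set (Fin n → ZMod 2)) [DecidablePred (· ∈ S)] : Decidable (Saturating S) := by
  unfold Saturating; infer_instance

instance (S : Set (Fin n → ZMod 2)) [DecidablePred (· ∈ S)] : Decidable (IsCap S) := by
  unfold IsCap; infer_instance

lemma completeCap_standardFrame_four : CompleteCap (standardFrame 4) :=
  ⟨by decide +kernel, by decide +kernel⟩

lemma ncard_standardFrame_four : (standardFrame 4).ncard = 5 := by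
  rw [Set.ncard_eq_toFinset_card']; decide +kernel

lemma ncard_oddVectors_four : (oddVectors 4).ncard = 8 := by
  rw [Set.ncard_eq_toFinset_card']; decide +kernel

lemma ncard_coordSplit_two_three : (coordSplit {(2 : Fin 4), 3}).ncard = 6 := by
  rw [Set.ncard_eq_toFinset_card']; decide +kernel

lemma ncard_coordSplit_three : (coordSplit {(3 : Fin 4)}).ncard = 8 := by
  rw [Set.ncard_eq_toFinset_card']; decide +kernel

lemma not_isCap_coordSplit_three : ¬ IsCap (coordSplit {(3 : Fin 4)}) := by
  decide +kernel

lemma exists_perm_comp_eq : ∀ x : Fin 4 → ZMod 2, x ≠ 0 → x ≠ 1 → ∃ σ : Equiv.Perm (Fin 4),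
    x ∘ σ = ![0, 0, 0, 1] ∨ x ∘ σ = ![1, 1, 0, 0] ∨ x ∘ σ = ![1, 1, 1, 0] := by
  decide +kernel

lemma exists_linearEquiv_apply_comp_perm {K : Type*} [Semiring K] {S : Set (Fin n → K)}
    {e : (Fin n → K) ≃ₗ[K] (Fin n → K)} (he : ∀ i, e (Pi.single i 1) ∈ S)
    (σ : Equiv.Perm (Fin n)) :
    ∃ f : (Fin n → K) ≃ₗ[K] (Fin n → K),
      (∀ i, f (Pi.single i 1) ∈ S) ∧ ∀ x, f (x ∘ σ) = e x := by
  refine ⟨(LinearEquiv.funCongrLeft K K σ.symm).trans e, fun i => ?_, fun x => ?_⟩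
  · have hi : LinearEquiv.funCongrLeft K K σ.symm (Pi.single i 1) = Pi.single (σ i) 1 :=
      Function.update_comp_equiv (0 : Fin n → K) σ.symm i 1
    simpa only [LinearEquiv.trans_apply, hi] using he (σ i)
  · exact congrArg e (funext fun i => congrArg x (σ.apply_symm_apply i))

lemma Saturating.exists_linearEquiv_normal_position {S : Set (Fin 4 → ZMod 2)}
    (hS : Saturating S) :
    ∃ e : (Fin 4 → ZMod 2) ≃ₗ[ZMod 2] (Fin 4 → ZMod 2), (∀ i, e (Pi.single i 1) ∈ S) ∧
      (e 1 ∈ S ∨ e ![1, 1, 0, 0] ∈ S ∧ e ![0, 0, 1, 1] ∈ S ∨ e ![1, 1, 1, 0] ∈ S) := by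
  obtain ⟨e, he⟩ := exists_linearEquiv_forall_mem_of_span_eq_top hS.span_eq_top
  by_cases h1 : e 1 ∈ S
  · exact ⟨e, he, Or.inl h1⟩
  obtain ⟨a, ha, b, hb, -, hab⟩ := hS.2 (e 1) (by simp) h1
  obtain ⟨x, rfl⟩ := e.surjective a
  obtain rfl : e (1 + x) = b := by
    rw [map_add, hab, add_right_comm, ZModModule.add_self, zero_add]
  have hx0 : x ≠ 0 := fun h => hS.1 _ ha (by rw [h, map_zero])
  have hx1 : x ≠ 1 := fun h => h1 (h ▸ ha)
  obtain ⟨σ, hσ⟩ := exists_perm_comp_eq x hx0 hx1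
  obtain ⟨f, hf, hfe⟩ := exists_linearEquiv_apply_comp_perm he σ
  have hx : f (x ∘ σ) ∈ S := hfe x ▸ ha
  have hx' : f (1 + x ∘ σ) ∈ S := hfe (1 + x) ▸ hb
  refine ⟨f, hf, Or.inr ?_⟩
  rcases hσ with h | h | h <;> rw [h] at hx hx'
  · exact Or.inr ((by decide : 1 + ![0, 0, 0, 1] = (![1, 1, 1, 0] : Fin 4 → ZMod 2)) ▸ hx')
  · exact Or.inl ⟨hx, (by decide : 1 + ![1, 1, 0, 0] = (![0, 0, 1, 1] : Fin 4 → ZMod 2)) ▸ hx'⟩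
  · exact Or.inr hx

lemma containsCopy_standardFrame_four {S : Set (Fin 4 → ZMod 2)} {a b c d : Fin 4 → ZMod 2}
    (hdet : Matrix.det ![a, b, c, d] ≠ 0) (ha : a ∈ S) (hb : b ∈ S) (hc : c ∈ S)
    (hd : d ∈ S) (hsum : a + b + c + d ∈ S) : ContainsCopy (standardFrame 4) S :=
  containsCopy_standardFrame (Matrix.linearIndependent_rows_of_det_ne_zero hdet)
    (by simp [Fin.forall_fin_succ, ha, hb, hc, hd])
    (by simpa [Fin.sum_univ_four] using hsum)

section Quadrangle

/-- The points of odd weight of the plane `x 3 = 0`; no three of them are collinear. -/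
def quadrangle : Finset (Fin 4 → ZMod 2) :=
  {![1, 0, 0, 0], ![0, 1, 0, 0], ![0, 0, 1, 0], ![1, 1, 1, 0]}

/-- The diagonal points of `quadrangle`, which are collinear because the plane is a Fano plane. -/
def diagonalLine : Finset (Fin 4 → ZMod 2) :=
  {![1, 1, 0, 0], ![1, 0, 1, 0], ![0, 1, 1, 0]}

variable {S : Set (Fin 4 → ZMod 2)}

lemma exists_independent_quadrangle_sum_eq : ∀ u ∈ quadrangle,
    ∃ p ∈ quadrangle, ∃ q ∈ quadrangle, ∃ r ∈ quadrangle,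
      p + q + r = u ∧ Matrix.det ![p, q, r, Pi.single 3 1] ≠ 0 := by
  decide +kernel

lemma exists_independent_diagonalLine_sum_eq : ∀ x ∈ diagonalLine, ∀ y ∈ diagonalLine, x ≠ y →
    ∃ p ∈ quadrangle, ∃ q ∈ quadrangle,
      x + p + q = y ∧ Matrix.det ![x, p, q, Pi.single 3 1] ≠ 0 := by
  decide +kernel

lemma add_single_notMem_of_mem_quadrangle (hframe : ¬ ContainsCopy (standardFrame 4) S)
    (hQ : ∀ q ∈ quadrangle, q ∈ S) (hd : Pi.single 3 1 ∈ S) {u : Fin 4 → ZMod 2}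
    (hu : u ∈ quadrangle) : u + Pi.single 3 1 ∉ S := by
  obtain ⟨p, hp, q, hq, r, hr, rfl, hdet⟩ := exists_independent_quadrangle_sum_eq u hu
  exact fun hsum => hframe
    (containsCopy_standardFrame_four hdet (hQ p hp) (hQ q hq) (hQ r hr) hd hsum)

lemma eq_of_mem_of_add_single_mem (hframe : ¬ ContainsCopy (standardFrame 4) S)
    (hQ : ∀ q ∈ quadrangle, q ∈ S) (hd : Pi.single 3 1 ∈ S) {x y : Fin 4 → ZMod 2}
    (hx : x ∈ diagonalLine) (hy : y ∈ diagonalLine) (hxS : x ∈ S)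
    (hyS : y + Pi.single 3 1 ∈ S) : x = y := by
  by_contra hxy
  obtain ⟨p, hp, q, hq, rfl, hdet⟩ := exists_independent_diagonalLine_sum_eq x hx y hy hxy
  exact hframe (containsCopy_standardFrame_four hdet hxS (hQ p hp) (hQ q hq) hd hyS)

lemma eq_zero_or_mem_quadrangle_or_mem_diagonalLine :
    ∀ x : Fin 4 → ZMod 2, x 3 = 0 → x = 0 ∨ x ∈ quadrangle ∨ x ∈ diagonalLine := by
  decide

lemma add_mem_diagonalLine : ∀ x ∈ diagonalLine, ∀ y ∈ diagonalLine, x ≠ y →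
    x + y ∈ diagonalLine := by
  decide

lemma ne_zero_of_mem_diagonalLine : ∀ x ∈ diagonalLine, x ≠ 0 := by
  decide

lemma Saturating.mem_or_add_single_mem (hS : Saturating S)
    (hframe : ¬ ContainsCopy (standardFrame 4) S)
    (hQ : ∀ q ∈ quadrangle, q ∈ S) (hd : Pi.single 3 1 ∈ S) {y : Fin 4 → ZMod 2}
    (hy : y ∈ diagonalLine) : y ∈ S ∨ y + Pi.single 3 1 ∈ S := by
  have hy3 : y 3 = 0 := by decide +revert
  by_contra! hyS
  have no_sum {a b : Fin 4 → ZMod 2} (ha : a ∈ S) (hb : b ∈ S) (hb3 : b 3 = 1)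
      (hab : y + Pi.single 3 1 = a + b) : False := by
    obtain ⟨u, rfl⟩ : ∃ u, u + Pi.single 3 1 = b := ⟨b - Pi.single 3 1, sub_add_cancel _ _⟩
    have hu3 : u 3 = 0 := by simpa using hb3
    have hyau : y = a + u := add_right_cancel (hab.trans (add_assoc a u _).symm)
    obtain rfl : a = y + u := by rw [hyau, add_assoc, ZModModule.add_self, add_zero]
    rcases eq_zero_or_mem_quadrangle_or_mem_diagonalLine u hu3 with rfl | huQ | huL
    · exact hyS.1 (by simpa using ha)
    · exact add_single_notMem_of_mem_quadrangle hframe hQ hd huQ hb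
    · have hyu : y ≠ u := fun h => hyS.2 (h ▸ hb)
      have hyu_eq : y + u = u := eq_of_mem_of_add_single_mem hframe hQ hd
        (add_mem_diagonalLine y hy u huL hyu) huL ha hb
      exact ne_zero_of_mem_diagonalLine y hy (add_eq_right.1 hyu_eq)
  have hne : y + Pi.single 3 1 ≠ 0 := fun h => by simpa [hy3] using congrFun h 3
  obtain ⟨a, ha, b, hb, -, hab⟩ := hS.2 _ hne hyS.2
  have hab3 : a 3 + b 3 = 1 := by simpa [hy3] using (congrFun hab 3).symm
  by_cases hb3 : b 3 = 0
  · rw [hb3, add_zero] at hab3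
    exact no_sum hb ha hab3 (hab.trans (add_comm a b))
  · exact no_sum ha hb (Fin.eq_one_of_ne_zero (b 3) hb3) hab

lemma Saturating.subset_of_quadrangle (hS : Saturating S)
    (hframe : ¬ ContainsCopy (standardFrame 4) S)
    (hQ : ∀ q ∈ quadrangle, q ∈ S) (hd : Pi.single 3 1 ∈ S) :
    coordSplit {3} ⊆ S ∨ oddVectors 4 ⊆ S := by
  have coordSplit_points : ∀ x ∈ coordSplit {(3 : Fin 4)},
      x ∈ quadrangle ∨ x ∈ diagonalLine ∨ x = Pi.single 3 1 := by decide
  have odd_points : ∀ x ∈ oddVectors 4,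
      x ∈ quadrangle ∨ x = Pi.single 3 1 ∨ ∃ y ∈ diagonalLine, x = y + Pi.single 3 1 := by
    decide
  by_cases hL : ∀ x ∈ diagonalLine, x ∈ S
  · refine Or.inl fun x hx => ?_
    rcases coordSplit_points x hx with h | h | rfl
    exacts [hQ x h, hL x h, hd]
  · push Not at hL
    obtain ⟨y, hy, hyS⟩ := hL
    have hydS := (hS.mem_or_add_single_mem hframe hQ hd hy).resolve_left hyS
    refine Or.inr fun z hz => ?_
    rcases odd_points z hz with h | rfl | ⟨x, hx, rfl⟩
    · exact hQ z h
    · exact hd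
    · refine (hS.mem_or_add_single_mem hframe hQ hd hx).resolve_left fun hxS => hyS ?_
      exact eq_of_mem_of_add_single_mem hframe hQ hd hx hy hxS hydS ▸ hxS

end Quadrangle

lemma coordSplit_two_three_subset {S : Set (Fin 4 → ZMod 2)} (hS : ∀ i, Pi.single i 1 ∈ S)
    (h : ![1, 1, 0, 0] ∈ S) (h' : ![0, 0, 1, 1] ∈ S) : coordSplit {2, 3} ⊆ S := by
  have points : ∀ x ∈ coordSplit {(2 : Fin 4), 3},
      x = ![1, 1, 0, 0] ∨ x = ![0, 0, 1, 1] ∨ ∃ i, x = Pi.single i 1 := by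
    decide
  intro x hx
  rcases points x hx with rfl | rfl | ⟨i, rfl⟩
  exacts [h, h', hS i]

lemma Saturating.containsCopy {S : Set (Fin 4 → ZMod 2)} (hS : Saturating S) :
    ContainsCopy (standardFrame 4) S ∨ ContainsCopy (coordSplit {2, 3}) S ∨
      ContainsCopy (oddVectors 4) S ∨ ContainsCopy (coordSplit {3}) S := by
  obtain ⟨e, he, h | ⟨h, h'⟩ | h⟩ := hS.exists_linearEquiv_normal_position
  · exact Or.inl ⟨e, Set.forall_mem_insert.2 ⟨h, Set.forall_mem_range.2 he⟩⟩
  · exact Or.inr (Or.inl ⟨e, coordSplit_two_three_subset (S := e ⁻¹' S) he h h'⟩)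
  · have hT : Saturating (e ⁻¹' S) := e.image_symm_eq_preimage S ▸ hS.image e.symm
    have hQ : ∀ q ∈ quadrangle, q ∈ e ⁻¹' S := by
      have points : ∀ q ∈ quadrangle, q = ![1, 1, 1, 0] ∨ ∃ i, q = Pi.single i 1 := by decide
      intro q hq
      rcases points q hq with rfl | ⟨i, rfl⟩
      exacts [h, he i]
    by_cases hframe : ContainsCopy (standardFrame 4) (e ⁻¹' S)
    · exact Or.inl hframe.of_preimage
    · refine Or.inr (Or.inr ?_)
      exact (hT.subset_of_quadrangle hframe hQ (he 3)).symm.imp (⟨e, ·⟩) (⟨e, ·⟩)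

/-- Up to projective equivalence there are exactly four minimal 1-saturating sets
in PG(3,2): one of size 5, one of size 6 and two of size 8. -/
theorem minSat_PG3_four_orbits :
    ∃ A B C D : Set (Fin 4 → ZMod 2),
      MinSat A ∧ MinSat B ∧ MinSat C ∧ MinSat D ∧
      A.ncard = 5 ∧ B.ncard = 6 ∧ C.ncard = 8 ∧ D.ncard = 8 ∧
      ¬ ProjEquiv A B ∧ ¬ ProjEquiv A C ∧ ¬ ProjEquiv A D ∧
      ¬ ProjEquiv B C ∧ ¬ ProjEquiv B D ∧ ¬ ProjEquiv C D ∧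
      ∀ S : Set (Fin 4 → ZMod 2), MinSat S →
        ProjEquiv S A ∨ ProjEquiv S B ∨ ProjEquiv S C ∨ ProjEquiv S D := by
  have hA : MinSat (standardFrame 4) := completeCap_standardFrame_four.minSat
  have hB : MinSat (coordSplit {(2 : Fin 4), 3}) := minSat_coordSplit (by decide) (by decide)
  have hC : MinSat (oddVectors 4) := completeCap_oddVectors.minSat
  have hD : MinSat (coordSplit {(3 : Fin 4)}) := minSat_coordSplit (by decide) (by decide)
  have cA := ncard_standardFrame_four
  have cB := ncard_coordSplit_two_three
  have cC := ncard_oddVectors_four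
  have cD := ncard_coordSplit_three
  refine ⟨_, _, _, _, hA, hB, hC, hD, cA, cB, cC, cD,
    fun h => ?_, fun h => ?_, fun h => ?_, fun h => ?_, fun h => ?_, fun h => ?_, fun S hS => ?_⟩
  iterate 5 · have := h.ncard_eq; omega
  · exact not_isCap_coordSplit_three (h.isCap completeCap_oddVectors.1)
  · exact hS.1.containsCopy.imp (hS.projEquiv_of_containsCopy hA.1) <|
      Or.imp (hS.projEquiv_of_containsCopy hB.1) <|
      Or.imp (hS.projEquiv_of_containsCopy hC.1) (hS.projEquiv_of_containsCopy hD.1)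
end

section
/- The GL construction produces minimal 1-saturating sets from complete caps: if S is a complete cap of nonzero vectors of (ZMod 2)^(v+1) with v ≥ 2 and s ∈ S, then the set {s} ∪ { s + s' : s' ∈ S, s' ≠ s } (obtained by replacing each point s' ∈ S \ {s} by the third point s + s' of the line through s and s') is a minimal 1-saturating set of the same cardinality as S. -/
/-!
Over `ZMod 2`, a set `S` of nonzero vectors is 1-saturating exactly when `U = S ∪ {0}` is an
additive 2-basis, that is `U + U` is the whole space; this property is invariant under translation.
The GL construction `T` is a translation in disguise: `T ∪ {0} = s + (S ∪ {0})`, where `s` and `0`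
exchange their roles. It remains to see that `S ∪ {0}` is minimal among additive 2-bases when
`S` is a cap: a point `c ∈ S` can only be written as `c + 0` or `0 + c`, and without `0` no point of
`S` can be written at all.
-/

section TwoBasis

open scoped Pointwise

variable {G : Type*}

/-- An additive 2-basis: a set `U` such that every element is a sum of two elements of `U`, which
may be equal. -/
def IsAdditiveTwoBasis [Add G] (U : Set G) : Prop :=
  U + U = Set.univ

theorem IsAdditiveTwoBasis.exists_add_eq [Add G] {U : Set G} (hU : IsAdditiveTwoBasis U) (x : G) :
    ∃ a ∈ U, ∃ b ∈ U, a + b = x :=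
  Set.mem_add.1 (hU.symm ▸ Set.mem_univ x)

theorem isAdditiveTwoBasis_vadd_iff [AddCommGroup G] {U : Set G} (g : G) :
    IsAdditiveTwoBasis (g +ᵥ U) ↔ IsAdditiveTwoBasis U := by
  unfold IsAdditiveTwoBasis
  rw [vadd_add_vadd_comm, Set.vadd_set_eq_univ]

theorem minimal_isAdditiveTwoBasis_vadd [AddCommGroup G] {U : Set G}
    (hU : Minimal IsAdditiveTwoBasis U) (g : G) : Minimal IsAdditiveTwoBasis (g +ᵥ U) := by
  refine ⟨(isAdditiveTwoBasis_vadd_iff g).2 hU.prop, fun V hV hVU ↦ ?_⟩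
  have hVU' : -g +ᵥ V ⊆ U := by
    rwa [← Set.subset_vadd_set_iff]
  exact Set.vadd_set_subset_iff_subset_neg_vadd_set.2 <|
    hU.le_of_le ((isAdditiveTwoBasis_vadd_iff (-g)).2 hV) hVU'

end TwoBasis

section GLConstruction

open scoped Pointwise

variable {G : Type*} {S : Set G} {s : G}

/-- The GL construction: each `s' ∈ S` other than `s` is replaced by `s + s'`, which in a projective
space over `ZMod 2` is the third point of the line through `s` and `s'`. -/
def glConstruction [Add G] (S : Set G) (s : G) : Set G :=
  insert s ((fun s' ↦ s + s') '' (S \ {s}))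

theorem insert_zero_glConstruction [AddMonoid G] (hs : s ∈ S) (hss : s + s = 0) :
    insert 0 (glConstruction S s) = s +ᵥ insert 0 S := by
  calc insert 0 (glConstruction S s)
      = insert (s + 0) (insert (s + s) (s +ᵥ (S \ {s}))) := by
        rw [hss, add_zero, Set.insert_comm]; rfl
    _ = s +ᵥ insert 0 (insert s (S \ {s})) := by simp only [Set.vadd_set_insert, vadd_eq_add]
    _ = s +ᵥ insert 0 S := by rw [Set.insert_sdiff_self_of_mem hs]

theorem zero_notMem_glConstruction [AddGroup G] (hs : s ≠ 0) (hss : s + s = 0) :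
    0 ∉ glConstruction S s := by
  rintro (h | ⟨s', ⟨-, hs'⟩, h⟩)
  · exact hs h.symm
  · exact hs' (add_left_cancel (h.trans hss.symm))

theorem encard_glConstruction [AddGroup G] (hS : 0 ∉ S) (hs : s ∈ S) :
    (glConstruction S s).encard = S.encard := by
  have hs_image : s ∉ (fun s' ↦ s + s') '' (S \ {s}) := by
    rintro ⟨s', ⟨hs', -⟩, h⟩
    exact hS (add_eq_left.1 h ▸ hs')
  rw [glConstruction, Set.encard_insert_of_notMem hs_image,
    (add_right_injective s).encard_image, Set.encard_sdiff_singleton_add_one hs]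

end GLConstruction

section Saturating

open scoped Pointwise

variable {n : ℕ} {S : Set (Fin n → ZMod 2)}

theorem saturating_iff_isAdditiveTwoBasis :
    Saturating S ↔ 0 ∉ S ∧ IsAdditiveTwoBasis (insert 0 S) := by
  constructor
  · rintro ⟨hne, hsat⟩
    refine ⟨fun h ↦ hne 0 h rfl, Set.eq_univ_iff_forall.2 fun x ↦ ?_⟩
    by_cases hx : x ∈ insert 0 S
    · exact ⟨0, Set.mem_insert 0 S, x, hx, zero_add x⟩
    · obtain ⟨hx0, hxS⟩ := not_or.1 hx
      obtain ⟨a, ha, b, hb, -, rfl⟩ := hsat x hx0 hxS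
      exact Set.add_mem_add (Set.mem_insert_of_mem 0 ha) (Set.mem_insert_of_mem 0 hb)
  · rintro ⟨h0, hbasis⟩
    refine ⟨fun s hs ↦ ne_of_mem_of_not_mem hs h0, fun x hx0 hxS ↦ ?_⟩
    obtain ⟨a, rfl | ha, b, rfl | hb, rfl⟩ := hbasis.exists_add_eq x
    · exact absurd (add_zero 0) hx0
    · exact absurd ((zero_add b).symm ▸ hb) hxS
    · exact absurd ((add_zero a).symm ▸ ha) hxS
    · refine ⟨a, ha, b, hb, ?_, rfl⟩
      rintro rfl
      exact hx0 (ZModModule.add_self a)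

theorem minSat_of_minimal_isAdditiveTwoBasis (h0 : 0 ∉ S)
    (hmin : Minimal IsAdditiveTwoBasis (insert 0 S)) : MinSat S := by
  refine ⟨saturating_iff_isAdditiveTwoBasis.2 ⟨h0, hmin.prop⟩, fun s hs hsat ↦ ?_⟩
  have hbasis := (saturating_iff_isAdditiveTwoBasis.1 hsat).2
  have hsub : insert 0 S ⊆ insert 0 (S \ {s}) :=
    hmin.le_of_le hbasis (Set.insert_subset_insert Set.sdiff_subset)
  rcases hsub (Set.mem_insert_of_mem 0 hs) with rfl | ⟨-, hss⟩
  · exact h0 hs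
  · exact hss rfl

theorem IsCap.zero_notMem (hS : IsCap S) : 0 ∉ S :=
  fun h ↦ hS.1 0 h rfl

theorem IsCap.add_notMem (hS : IsCap S) {a b : Fin n → ZMod 2} (ha : a ∈ S) (hb : b ∈ S) :
    a + b ∉ S := by
  intro hab
  have hab_ne : a ≠ b := by
    rintro rfl
    exact hS.zero_notMem (ZModModule.add_self a ▸ hab)
  exact hS.2 a ha b hb (a + b) hab hab_ne (left_ne_add.2 (hS.1 b hb))
    (right_ne_add.2 (hS.1 a ha)) (ZModModule.add_self (a + b))

theorem IsCap.insert_zero_subset_of_isAdditiveTwoBasis (hS : IsCap S) {U : Set (Fin n → ZMod 2)}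
    (hUS : U ⊆ insert 0 S) (hU : IsAdditiveTwoBasis U) : insert 0 S ⊆ U := by
  have hS_subset : S ⊆ U := by
    intro c hc
    obtain ⟨a, ha, b, hb, rfl⟩ := hU.exists_add_eq c
    rcases hUS ha with rfl | haS
    · rwa [zero_add]
    rcases hUS hb with rfl | hbS
    · rwa [add_zero]
    exact absurd hc (hS.add_notMem haS hbS)
  have h0 : 0 ∈ U := by
    by_contra h0
    have hU_subset : U ⊆ S := (Set.subset_insert_iff_of_notMem h0).1 hUS
    obtain ⟨c, hc, -⟩ := hU.exists_add_eq 0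
    obtain ⟨a, ha, b, hb, rfl⟩ := hU.exists_add_eq c
    exact hS.add_notMem (hU_subset ha) (hU_subset hb) (hU_subset hc)
  exact Set.insert_subset h0 hS_subset

theorem CompleteCap.minimal_isAdditiveTwoBasis (hS : CompleteCap S) :
    Minimal IsAdditiveTwoBasis (insert 0 S) :=
  ⟨(saturating_iff_isAdditiveTwoBasis.1 hS.2).2,
    fun _ hU hUS ↦ hS.1.insert_zero_subset_of_isAdditiveTwoBasis hUS hU⟩

theorem CompleteCap.minSat_glConstruction (hS : CompleteCap S) {s : Fin n → ZMod 2} (hs : s ∈ S) :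
    MinSat (glConstruction S s) := by
  have hss : s + s = 0 := ZModModule.add_self s
  refine minSat_of_minimal_isAdditiveTwoBasis (zero_notMem_glConstruction (hS.1.1 s hs) hss) ?_
  rw [insert_zero_glConstruction hs hss]
  exact minimal_isAdditiveTwoBasis_vadd hS.minimal_isAdditiveTwoBasis s

end Saturating

/-- The GL construction: replacing each point s' ≠ s of a complete cap S by the third
point s + s' of the line through s and s' yields a minimal 1-saturating set of the
same cardinality as S. -/
theorem GL_construction_minSat (v : ℕ) (hv : 2 ≤ v)
    (S : Set (Fin (v + 1) → ZMod 2)) (hS : CompleteCap S)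
    (s : Fin (v + 1) → ZMod 2) (hs : s ∈ S) :
    MinSat (insert s ((fun s' => s + s') '' (S \ {s}))) ∧
    (insert s ((fun s' => s + s') '' (S \ {s}))).ncard = S.ncard := by
  constructor
  · exact hS.minSat_glConstruction hs
  · exact congrArg ENat.toNat (encard_glConstruction hS.1.zero_notMem hs)
end
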